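/- arXiv:1311.6257 — 2 statements merged into one kernel-verified Lean document; each statement's English description precedes it below -/
import Mathlib

section
/- Let T > 0, let S ⊆ (0, T] be a finite set of jump times with associated counting path Y(t) = #{τ ∈ S : τ ≤ t}, and let λ : [0, T] → (0, ∞) be measurable, bounded, and continuous at every point of [0, T] ∖ S. Define Z(t) = exp(−∫₀ᵗ (λ(u) − 1) du) · ∏_{τ ∈ S, τ ≤ t} λ(τ), and for τ ∈ S write Z(τ−) = exp(−∫₀^τ (λ(u) − 1) du) · ∏_{τ' ∈ S, τ' < τ} λ(τ'). Then for every t ∈ [0, T], Z(t) = 1 + Σ_{τ ∈ S, τ ≤ t} Z(τ−)(λ(τ) − 1) − ∫₀ᵗ Z(u)(λ(u) − 1) du. (That is, the explicit product–exponential formula solves the stochastic equation Z_t = 1 + ∫_{(0,t]} Z_{u−}(λ_u − 1)(dY_u − du) pathwise.) -/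
open MeasureTheory Finset

/-- The explicit product–exponential solution
`Z(t) = exp(−∫₀ᵗ (λ(u) − 1) du) · ∏_{τ ∈ S, τ ≤ t} λ(τ)`. -/
noncomputable def Zfun (S : Finset ℝ) (lam : ℝ → ℝ) (t : ℝ) : ℝ :=
  Real.exp (-∫ u in (0:ℝ)..t, (lam u - 1)) * ∏ τ ∈ S.filter (· ≤ t), lam τ

/-- The left limit of `Zfun` at a jump time:
`Z(τ−) = exp(−∫₀^τ (λ(u) − 1) du) · ∏_{τ' ∈ S, τ' < τ} λ(τ')`. -/
noncomputable def Zminus (S : Finset ℝ) (lam : ℝ → ℝ) (t : ℝ) : ℝ :=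
  Real.exp (-∫ u in (0:ℝ)..t, (lam u - 1)) * ∏ τ ∈ S.filter (· < t), lam τ

theorem aux_prod (S : Finset ℝ) (lam : ℝ → ℝ) (t : ℝ) :
    ∏ τ ∈ S.filter (· ≤ t), lam τ = 1 + ∑ τ ∈ S.filter (· ≤ t),
      (∏ σ ∈ S.filter (· < τ), lam σ) * (lam τ - 1) := by
  have h := Finset.prod_add_ordered (S.filter (· ≤ t)) (fun _ => (1:ℝ)) (fun τ => lam τ - 1)
  simp only [add_sub_cancel, Finset.prod_const_one, mul_one] at h
  rw [h]
  congr 1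
  apply Finset.sum_congr rfl
  intro τ hτ
  rw [mul_comm, Finset.filter_filter]
  congr 1
  apply Finset.prod_congr _ (fun _ _ => rfl)
  ext σ
  simp only [Finset.mem_filter] at hτ ⊢
  constructor
  · rintro ⟨a, b, c⟩
    exact ⟨a, c⟩
  · rintro ⟨a, c⟩
    exact ⟨a, c.le.trans hτ.2, c⟩

theorem aux_int (T : ℝ) (lam : ℝ → ℝ) (hmeas : Measurable lam)
    (hbdd : ∃ C : ℝ, ∀ t ∈ Set.Icc (0:ℝ) T, |lam t| ≤ C) :
    IntegrableOn (fun u => lam u - 1) (Set.Icc 0 T) := by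
  obtain ⟨C, hC⟩ := hbdd
  refine Measure.integrableOn_of_bounded (M := C + 1) (by simp) (by fun_prop) ?_
  filter_upwards [ae_restrict_mem measurableSet_Icc] with u hu
  have := hC u hu
  rw [Real.norm_eq_abs]
  rw [abs_le] at *
  constructor <;> linarith

theorem aux_contE (T : ℝ) (hT : 0 < T) (lam : ℝ → ℝ)
    (hi : IntegrableOn (fun u => lam u - 1) (Set.Icc 0 T)) :
    ContinuousOn (fun t => Real.exp (-∫ u in (0:ℝ)..t, (lam u - 1))) (Set.Icc 0 T) := by
  have h := intervalIntegral.continuousOn_primitive_interval (a := 0) (b := T)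
    (f := fun u => lam u - 1) (μ := volume) (by rwa [Set.uIcc_of_le hT.le])
  rw [Set.uIcc_of_le hT.le] at h
  exact h.neg.rexp

theorem aux_intE (T : ℝ) (hT : 0 < T) (lam : ℝ → ℝ)
    (hi : IntegrableOn (fun u => lam u - 1) (Set.Icc 0 T)) :
    IntegrableOn (fun t => Real.exp (-∫ u in (0:ℝ)..t, (lam u - 1)) * (lam t - 1))
      (Set.Icc 0 T) :=
  hi.continuousOn_mul (aux_contE T hT lam hi) isCompact_Icc

theorem aux_ftc (T : ℝ) (hT : 0 < T) (S : Finset ℝ)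
    (lam : ℝ → ℝ) (hmeas : Measurable lam)
    (hi : IntegrableOn (fun u => lam u - 1) (Set.Icc 0 T))
    (hcont : ∀ t ∈ Set.Icc (0:ℝ) T, t ∉ (S : Set ℝ) →
      ContinuousWithinAt lam (Set.Icc (0:ℝ) T) t) (a b : ℝ) (ha : 0 ≤ a) (hab : a ≤ b)
    (hb : b ≤ T) :
    ∫ u in a..b, Real.exp (-∫ v in (0:ℝ)..u, (lam v - 1)) * (lam u - 1) =
      Real.exp (-∫ v in (0:ℝ)..a, (lam v - 1)) - Real.exp (-∫ v in (0:ℝ)..b, (lam v - 1)) := by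
  have hsub : Set.Icc a b ⊆ Set.Icc 0 T := Set.Icc_subset_Icc ha hb
  have h := integral_eq_of_hasDerivAt_off_countable_of_le
    (fun u => - Real.exp (-∫ v in (0:ℝ)..u, (lam v - 1)))
    (fun u => Real.exp (-∫ v in (0:ℝ)..u, (lam v - 1)) * (lam u - 1)) hab
    (s := (S : Set ℝ)) S.countable_toSet
    ((aux_contE T hT lam hi).neg.mono hsub) ?_ ?_
  · rw [h]; ring
  · rintro x ⟨⟨hx1, hx2⟩, hxS⟩
    have hx0 : 0 < x := by linarith
    have hxT : x < T := by linarith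
    have hc : ContinuousAt lam x :=
      (hcont x ⟨hx0.le, hxT.le⟩ hxS).continuousAt (Icc_mem_nhds hx0 hxT)
    have hd : HasDerivAt (fun u => ∫ v in (0:ℝ)..u, (lam v - 1)) (lam x - 1) x := by
      apply intervalIntegral.integral_hasDerivAt_right
      · rw [intervalIntegrable_iff_integrableOn_Icc_of_le hx0.le]
        exact hi.mono_set (Set.Icc_subset_Icc le_rfl hxT.le)
      · exact (hmeas.sub_const 1).stronglyMeasurable.stronglyMeasurableAtFilter
      · exact hc.sub continuousAt_const
    have h3 := hd.fun_neg.exp.fun_neg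
    rwa [mul_neg, neg_neg] at h3
  · rw [intervalIntegrable_iff_integrableOn_Icc_of_le hab]
    exact (aux_intE T hT lam hi).mono_set hsub

/-- The explicit product–exponential formula solves the stochastic equation
`Z_t = 1 + ∫_{(0,t]} Z_{u−}(λ_u − 1)(dY_u − du)` pathwise, where the `dY` integral
is the sum over jump times in `S` up to `t`. -/
theorem zfun_solves_pathwise_sde
    (T : ℝ) (hT : 0 < T) (S : Finset ℝ) (hS : ∀ τ ∈ S, τ ∈ Set.Ioc (0:ℝ) T)
    (lam : ℝ → ℝ) (hmeas : Measurable lam)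
    (hpos : ∀ t ∈ Set.Icc (0:ℝ) T, 0 < lam t)
    (hbdd : ∃ C : ℝ, ∀ t ∈ Set.Icc (0:ℝ) T, |lam t| ≤ C)
    (hcont : ∀ t ∈ Set.Icc (0:ℝ) T, t ∉ (S : Set ℝ) →
      ContinuousWithinAt lam (Set.Icc (0:ℝ) T) t) :
    ∀ t ∈ Set.Icc (0:ℝ) T,
      Zfun S lam t =
        1 + (∑ τ ∈ S.filter (· ≤ t), Zminus S lam τ * (lam τ - 1))
          - ∫ u in (0:ℝ)..t, Zfun S lam u * (lam u - 1) := by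
  intro t ht
  have hi := aux_int T lam hmeas hbdd
  have hE := aux_intE T hT lam hi
  set E : ℝ → ℝ := fun u => Real.exp (-∫ v in (0:ℝ)..u, (lam v - 1)) with hEdef
  have hftc : ∀ a b : ℝ, 0 ≤ a → a ≤ b → b ≤ T →
      ∫ u in a..b, E u * (lam u - 1) = E a - E b := aux_ftc T hT S lam hmeas hi hcont
  set a : ℝ → ℝ := fun τ => (∏ σ ∈ S.filter (· < τ), lam σ) * (lam τ - 1) with hadef
  have hZ : ∀ u, Zfun S lam u = E u * (1 + ∑ τ ∈ S.filter (· ≤ u), a τ) := by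
    intro u
    rw [Zfun, aux_prod]
  have hZm : ∀ τ, Zminus S lam τ * (lam τ - 1) = E τ * a τ := by
    intro τ
    simp only [Zminus, hEdef, hadef]
    ring
  have hEi : IntervalIntegrable (fun u => E u * (lam u - 1)) volume 0 t := by
    rw [intervalIntegrable_iff_integrableOn_Icc_of_le ht.1]
    exact hE.mono_set (Set.Icc_subset_Icc le_rfl ht.2)
  have hE0 : E 0 = 1 := by simp [hEdef]
  have key : ∀ τ ∈ S.filter (· ≤ t),
      IntervalIntegrable (fun u => a τ * (Set.Ici τ).indicator (fun u => E u * (lam u - 1)) u)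
        volume 0 t ∧
      ∫ u in (0:ℝ)..t, a τ * (Set.Ici τ).indicator (fun u => E u * (lam u - 1)) u =
        a τ * (E τ - E t) := by
    intro τ hτ
    rw [Finset.mem_filter] at hτ
    have h0 := (hS τ hτ.1).1
    constructor
    · apply IntervalIntegrable.const_mul
      rw [intervalIntegrable_iff_integrableOn_Icc_of_le ht.1] at hEi ⊢
      exact hEi.indicator measurableSet_Ici
    · rw [intervalIntegral.integral_const_mul]
      congr 1
      rw [← hftc τ t h0.le hτ.2 ht.2, intervalIntegral.integral_of_le ht.1,
        intervalIntegral.integral_of_le hτ.2, setIntegral_indicator measurableSet_Ici,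
        ← integral_Icc_eq_integral_Ioc]
      congr 2
      ext u
      simp only [Set.mem_inter_iff, Set.mem_Ioc, Set.mem_Ici, Set.mem_Icc]
      constructor
      · rintro ⟨⟨_, h2⟩, h3⟩
        exact ⟨h3, h2⟩
      · rintro ⟨h1, h2⟩
        exact ⟨⟨by linarith, h2⟩, h1⟩
  have hint : ∫ u in (0:ℝ)..t, Zfun S lam u * (lam u - 1) =
      ∫ u in (0:ℝ)..t, (E u * (lam u - 1) + ∑ τ ∈ S.filter (· ≤ t),
        a τ * (Set.Ici τ).indicator (fun u => E u * (lam u - 1)) u) := by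
    apply intervalIntegral.integral_congr
    intro u hu
    rw [Set.uIcc_of_le ht.1] at hu
    have hf : S.filter (· ≤ u) = (S.filter (· ≤ t)).filter (· ≤ u) := by
      ext σ
      simp only [Finset.mem_filter]
      constructor
      · rintro ⟨h1, h2⟩
        exact ⟨⟨h1, h2.trans hu.2⟩, h2⟩
      · rintro ⟨⟨h1, _⟩, h2⟩
        exact ⟨h1, h2⟩
    simp only
    rw [hZ, hf, Finset.sum_filter, mul_add, add_mul, mul_one, Finset.mul_sum, Finset.sum_mul]
    congr 1
    apply Finset.sum_congr rfl
    intro τ _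
    by_cases h : τ ≤ u
    · simp [h]; ring
    · simp [h]
  rw [hint, intervalIntegral.integral_add hEi
    (by
      have h := IntervalIntegrable.sum _ (fun τ hτ => (key τ hτ).1)
      rw [Finset.sum_fn] at h
      exact h),
    intervalIntegral.integral_finsetSum (fun τ hτ => (key τ hτ).1),
    Finset.sum_congr rfl (fun τ hτ => (key τ hτ).2), hftc 0 t le_rfl ht.1 ht.2, hZ]
  simp only [hZm, mul_sub, Finset.sum_sub_distrib, ← Finset.sum_mul]
  rw [hE0, Finset.sum_congr rfl (fun τ _ => mul_comm (E τ) (a τ))]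
  ring
end

section
/- Fix T > 0, a finite set S ⊆ (0, T], and ℓ : [0, T] → ℝ^N with all components strictly positive, bounded, and continuous at every point of [0, T] ∖ S; write Λ(t) for the diagonal matrix with entries ℓ(t) and Γ(t) for the diagonal matrix with entries Γ_{ii}(t) = exp(−∫₀ᵗ (ℓ_i(s) − 1) ds) · ∏_{τ ∈ S, τ ≤ t} ℓ_i(τ). Then Γ(t) is invertible for every t, the map t ↦ Γ(t)⁻¹ is differentiable at every t ∈ (0, T) ∖ S with derivative (d/dt) Γ(t)⁻¹ = (Λ(t) − I) Γ(t)⁻¹, and at every jump time τ ∈ S one has Γ(τ)⁻¹ = Λ(τ)⁻¹ Γ(τ−)⁻¹, where Γ(τ−) denotes the left limit. (These are the dynamics dΓ_t⁻¹ = (Λ_t − I)Γ_t⁻¹ dt + (Λ_t⁻¹ − I)Γ_{t−}⁻¹ dY_t used to derive the robust filter.) -/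
open MeasureTheory Finset Matrix

attribute [local instance] Matrix.normedAddCommGroup Matrix.normedSpace

/-- `Γ(t)`: the diagonal matrix with entries
`Γ_{ii}(t) = exp(−∫₀ᵗ (ℓ_i(s) − 1) ds) · ∏_{τ ∈ S, τ ≤ t} ℓ_i(τ)`. -/
noncomputable def Gammafun {N : ℕ} (S : Finset ℝ) (ℓ : ℝ → Fin N → ℝ) (t : ℝ) :
    Matrix (Fin N) (Fin N) ℝ :=
  Matrix.diagonal fun i =>
    Real.exp (-∫ s in (0:ℝ)..t, (ℓ s i - 1)) * ∏ τ ∈ S.filter (· ≤ t), ℓ τ i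

/-- The left limit `Γ(t−)`: the diagonal matrix with entries
`exp(−∫₀ᵗ (ℓ_i(s) − 1) ds) · ∏_{τ ∈ S, τ < t} ℓ_i(τ)`. -/
noncomputable def GammafunMinus {N : ℕ} (S : Finset ℝ) (ℓ : ℝ → Fin N → ℝ) (t : ℝ) :
    Matrix (Fin N) (Fin N) ℝ :=
  Matrix.diagonal fun i =>
    Real.exp (-∫ s in (0:ℝ)..t, (ℓ s i - 1)) * ∏ τ ∈ S.filter (· < t), ℓ τ i

theorem aux_diag_inv {N : ℕ} (v : Fin N → ℝ) (hv : ∀ i, v i ≠ 0) :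
    (Matrix.diagonal v)⁻¹ = Matrix.diagonal (fun i => (v i)⁻¹) := by
  apply Matrix.inv_eq_right_inv
  rw [Matrix.diagonal_mul_diagonal, ← Matrix.diagonal_one]
  congr 1
  funext i
  exact mul_inv_cancel₀ (hv i)

theorem aux_meas (T : ℝ) (S : Finset ℝ) (f : ℝ → ℝ)
    (hcont : ∀ t ∈ Set.Icc (0:ℝ) T, t ∉ (S : Set ℝ) →
      ContinuousWithinAt f (Set.Icc (0:ℝ) T) t) :
    AEStronglyMeasurable f (volume.restrict (Set.Icc (0:ℝ) T)) := by
  have h1 : ContinuousOn f (Set.Icc (0:ℝ) T \ (S : Set ℝ)) := fun t ht =>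
    (hcont t ht.1 ht.2).mono Set.sdiff_subset
  have h2 := h1.aestronglyMeasurable (μ := volume)
    (measurableSet_Icc.diff S.finite_toSet.measurableSet)
  have h3 : (Set.Icc (0:ℝ) T \ (S : Set ℝ) : Set ℝ) =ᵐ[volume] Set.Icc (0:ℝ) T :=
    sdiff_null_ae_eq_self (S.finite_toSet.measure_zero volume)
  rwa [Measure.restrict_congr_set h3] at h2

theorem aux_deriv (T : ℝ) (S : Finset ℝ) (f : ℝ → ℝ)
    (hbdd : ∃ C : ℝ, ∀ t ∈ Set.Icc (0:ℝ) T, |f t| ≤ C)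
    (hcont : ∀ t ∈ Set.Icc (0:ℝ) T, t ∉ (S : Set ℝ) →
      ContinuousWithinAt f (Set.Icc (0:ℝ) T) t) (t : ℝ) (ht : t ∈ Set.Ioo (0:ℝ) T)
    (htS : t ∉ (S : Set ℝ)) :
    HasDerivAt (fun u => ∫ s in (0:ℝ)..u, (f s - 1)) (f t - 1) t := by
  obtain ⟨C, hC⟩ := hbdd
  have hm := aux_meas T S f hcont
  have hint : IntegrableOn f (Set.Icc (0:ℝ) T) volume := by
    refine Integrable.of_bound hm C ?_
    exact (ae_restrict_iff' measurableSet_Icc).2 (Filter.Eventually.of_forall hC)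
  have hnhds : Set.Icc (0:ℝ) T ∈ nhds t := Icc_mem_nhds ht.1 ht.2
  have hint' : IntegrableOn (fun s => f s - 1) (Set.Icc (0:ℝ) T) volume :=
    Integrable.sub hint (integrableOn_const (by simp))
  refine intervalIntegral.integral_hasDerivAt_right ?_ ?_ ?_
  · rw [intervalIntegrable_iff_integrableOn_Icc_of_le ht.1.le]
    exact hint'.mono_set (Set.Icc_subset_Icc_right ht.2.le)
  · exact ⟨_, hnhds, hint'.aestronglyMeasurable⟩
  · exact ((hcont t (Set.Ioo_subset_Icc_self ht) htS).continuousAt hnhds).sub continuousAt_const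

theorem aux_filter (S : Finset ℝ) (t : ℝ) (htS : t ∉ (S : Set ℝ)) :
    ∀ᶠ u in nhds t, S.filter (· ≤ u) = S.filter (· ≤ t) := by
  have h : ∀ᶠ u in nhds t, ∀ τ ∈ S, (τ ≤ u ↔ τ ≤ t) := by
    rw [Filter.eventually_all_finset]
    intro τ hτ
    have hne : τ ≠ t := fun h => htS (h ▸ hτ)
    rcases lt_or_gt_of_ne hne with h | h
    · filter_upwards [lt_mem_nhds h] with u hu
      exact ⟨fun _ => h.le, fun _ => hu.le⟩
    · filter_upwards [gt_mem_nhds h] with u hu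
      exact ⟨fun h' => absurd h' (not_le.2 hu), fun h' => absurd h' (not_le.2 h)⟩
  filter_upwards [h] with u hu
  exact Finset.filter_congr hu

/-- Dynamics of `Γ⁻¹` used to derive the robust filter: `Γ(t)` is invertible for all
`t ∈ [0, T]`, the map `t ↦ Γ(t)⁻¹` has derivative `(Λ(t) − I) Γ(t)⁻¹` at every
`t ∈ (0, T) ∖ S`, and at every jump time `τ ∈ S` one has `Γ(τ)⁻¹ = Λ(τ)⁻¹ Γ(τ−)⁻¹`. -/
theorem gamma_inverse_dynamics
    {N : ℕ} (T : ℝ) (hT : 0 < T) (S : Finset ℝ) (hS : ∀ τ ∈ S, τ ∈ Set.Ioc (0:ℝ) T)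
    (ℓ : ℝ → Fin N → ℝ)
    (hpos : ∀ t ∈ Set.Icc (0:ℝ) T, ∀ i, 0 < ℓ t i)
    (hbdd : ∃ C : ℝ, ∀ t ∈ Set.Icc (0:ℝ) T, ∀ i, |ℓ t i| ≤ C)
    (hcont : ∀ t ∈ Set.Icc (0:ℝ) T, t ∉ (S : Set ℝ) →
      ContinuousWithinAt ℓ (Set.Icc (0:ℝ) T) t) :
    (∀ t ∈ Set.Icc (0:ℝ) T, IsUnit (Gammafun S ℓ t)) ∧
    (∀ t ∈ Set.Ioo (0:ℝ) T, t ∉ (S : Set ℝ) →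
      HasDerivAt (fun u => (Gammafun S ℓ u)⁻¹)
        ((Matrix.diagonal (ℓ t) - 1) * (Gammafun S ℓ t)⁻¹) t) ∧
    (∀ τ ∈ S,
      (Gammafun S ℓ τ)⁻¹ = (Matrix.diagonal (ℓ τ))⁻¹ * (GammafunMinus S ℓ τ)⁻¹) := by
  have hSpos : ∀ τ ∈ S, ∀ i, 0 < ℓ τ i := fun τ hτ i =>
    hpos τ (Set.Ioc_subset_Icc_self (hS τ hτ)) i
  have hne : ∀ u i, Real.exp (-∫ s in (0:ℝ)..u, (ℓ s i - 1)) *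
      ∏ τ ∈ S.filter (· ≤ u), ℓ τ i ≠ 0 := fun u i =>
    mul_ne_zero (Real.exp_ne_zero _) (Finset.prod_ne_zero_iff.2 fun τ hτ =>
      (hSpos τ (Finset.mem_filter.1 hτ).1 i).ne')
  have hne' : ∀ u i, Real.exp (-∫ s in (0:ℝ)..u, (ℓ s i - 1)) *
      ∏ τ ∈ S.filter (· < u), ℓ τ i ≠ 0 := fun u i =>
    mul_ne_zero (Real.exp_ne_zero _) (Finset.prod_ne_zero_iff.2 fun τ hτ =>
      (hSpos τ (Finset.mem_filter.1 hτ).1 i).ne')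
  have hinv : ∀ u, (Gammafun S ℓ u)⁻¹ = Matrix.diagonal (fun i =>
      (Real.exp (-∫ s in (0:ℝ)..u, (ℓ s i - 1)) * ∏ τ ∈ S.filter (· ≤ u), ℓ τ i)⁻¹) :=
    fun u => aux_diag_inv _ (hne u)
  have hinv' : ∀ u, (GammafunMinus S ℓ u)⁻¹ = Matrix.diagonal (fun i =>
      (Real.exp (-∫ s in (0:ℝ)..u, (ℓ s i - 1)) * ∏ τ ∈ S.filter (· < u), ℓ τ i)⁻¹) :=
    fun u => aux_diag_inv _ (hne' u)
  refine ⟨?_, ?_, ?_⟩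
  · intro t _
    rw [Matrix.isUnit_iff_isUnit_det, Gammafun, Matrix.det_diagonal, isUnit_iff_ne_zero]
    exact Finset.prod_ne_zero_iff.2 fun i _ => hne t i
  · intro t ht htS
    have hd : ∀ i, HasDerivAt (fun u =>
        (Real.exp (-∫ s in (0:ℝ)..u, (ℓ s i - 1)) * ∏ τ ∈ S.filter (· ≤ u), ℓ τ i)⁻¹)
        ((ℓ t i - 1) *
        (Real.exp (-∫ s in (0:ℝ)..t, (ℓ s i - 1)) * ∏ τ ∈ S.filter (· ≤ t), ℓ τ i)⁻¹) t := by
      intro i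
      have h1 := aux_deriv T S (fun s => ℓ s i) (hbdd.imp fun C hC t ht => hC t ht i)
        (fun t ht hts => (continuousWithinAt_pi.1 (hcont t ht hts)) i) t ht htS
      have h2 := (h1.exp).mul_const (∏ τ ∈ S.filter (· ≤ t), ℓ τ i)⁻¹
      have h3 := h2.congr_of_eventuallyEq (f₁ := fun u =>
        (Real.exp (-∫ s in (0:ℝ)..u, (ℓ s i - 1)) * ∏ τ ∈ S.filter (· ≤ u), ℓ τ i)⁻¹) (by
        filter_upwards [aux_filter S t htS] with u hu
        rw [hu, mul_inv, Real.exp_neg, inv_inv])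
      refine HasDerivAt.congr_deriv h3 ?_
      rw [mul_inv, Real.exp_neg, inv_inv]
      ring
    simp only [hinv]
    rw [← Matrix.diagonal_one, Matrix.diagonal_sub, Matrix.diagonal_mul_diagonal]
    refine hasDerivAt_pi.2 fun i => hasDerivAt_pi.2 fun j => ?_
    by_cases hij : i = j
    · subst hij
      simpa only [Matrix.diagonal_apply_eq] using hd i
    · simpa only [Matrix.diagonal_apply_ne _ hij] using hasDerivAt_const t (0:ℝ)
  · intro τ hτ
    rw [hinv, hinv', aux_diag_inv _ (fun i => (hSpos τ hτ i).ne'), Matrix.diagonal_mul_diagonal]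
    congr 1
    funext i
    have hf : S.filter (· ≤ τ) = insert τ (S.filter (· < τ)) := by
      ext x
      simp only [Finset.mem_filter, Finset.mem_insert, le_iff_lt_or_eq]
      constructor
      · rintro ⟨h, h' | h'⟩
        · exact Or.inr ⟨h, h'⟩
        · exact Or.inl h'
      · rintro (h | h)
        · exact ⟨h ▸ hτ, Or.inr h⟩
        · exact ⟨h.1, Or.inl h.2⟩
    rw [hf, Finset.prod_insert (by simp), ← mul_inv]
    congr 1
    ring
end
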